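/- (Accuracy decreases as γ increases) Let p be a probability measure on a measurable space Z and let ℓ : Z → ℝ be measurable with constants 0 < c ≤ ℓ(z) ≤ C for all z. For β > 0 let q^{(β)} denote the probability measure with density z ↦ ℓ(z)^{β} / ∫ ℓ^{β} dp with respect to p. Then for all 0 < β₁ ≤ β₂, the expected log-likelihood is monotone: ∫ log ℓ dq^{(β₁)} ≤ ∫ log ℓ dq^{(β₂)}. Equivalently, writing β = 1/γ, the average accuracy E_{q_γ*}[log ℓ] of the power posterior q_γ*(z) ∝ p(z) ℓ(z)^{1/γ} is non-increasing in γ. -/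

import Mathlib

open MeasureTheory ProbabilityTheory

/-!
With `X = log ℓ`, the measure `q^(β)` is the exponential tilt of `p` by `β X`, and tilts compose:
`q^(β₂)` is the tilt of `q = q^(β₁)` by `r X`, where `r = β₂ - β₁ ≥ 0`. So it is enough that tilting
a probability measure `q` by `r X` does not decrease the mean `m` of `X`, that is,
`m * 𝔼[exp (r X)] ≤ 𝔼[X * exp (r X)]`. This follows by integrating
`0 ≤ (X - m) * (exp (r X) - exp (r m))`.
-/

section Tilted

variable {Ω : Type*} [MeasurableSpace Ω] {X : Ω → ℝ}

lemma integral_mul_integral_comp_le_integral_mul_comp_of_monotone {μ : Measure Ω}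
    [IsProbabilityMeasure μ] {φ : ℝ → ℝ} (hφ : Monotone φ) (hX : Integrable X μ)
    (hφX : Integrable (fun ω ↦ φ (X ω)) μ) (hXφX : Integrable (fun ω ↦ X ω * φ (X ω)) μ) :
    (∫ ω, X ω ∂μ) * ∫ ω, φ (X ω) ∂μ ≤ ∫ ω, X ω * φ (X ω) ∂μ := by
  set m := ∫ ω, X ω ∂μ
  have same_sign (ω : Ω) : 0 ≤ (φ (X ω) - φ m) * (X ω - m) :=
    (monovary_id_iff.2 hφ).sub_mul_sub_nonneg m (X ω)
  have hmφX : Integrable (fun ω ↦ m * φ (X ω)) μ := hφX.const_mul m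
  have hcentered : Integrable (fun ω ↦ (X ω - m) * φ m) μ :=
    (hX.sub (integrable_const m)).mul_const (φ m)
  have integral_centered : ∫ ω, (X ω - m) * φ m ∂μ = 0 := by
    rw [integral_mul_const, integral_sub hX (integrable_const m), integral_const, probReal_univ,
      one_smul, sub_self, zero_mul]
  calc
    m * ∫ ω, φ (X ω) ∂μ = ∫ ω, m * φ (X ω) + (X ω - m) * φ m ∂μ := by
      rw [integral_add hmφX hcentered, integral_centered, add_zero, integral_const_mul]
    _ ≤ ∫ ω, X ω * φ (X ω) ∂μ :=
      integral_mono (hmφX.add hcentered) hXφX fun ω ↦ by linarith [same_sign ω]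

lemma integral_le_integral_tilted_mul {μ : Measure Ω} [IsProbabilityMeasure μ] {r : ℝ}
    (hr : 0 ≤ r) (hexp : Integrable (fun ω ↦ Real.exp (r * X ω)) μ) (hX : Integrable X μ)
    (hX_tilted : Integrable X (μ.tilted fun ω ↦ r * X ω)) :
    ∫ ω, X ω ∂μ ≤ ∫ ω, X ω ∂(μ.tilted fun ω ↦ r * X ω) := by
  have hφ : Monotone fun x ↦ Real.exp (r * x) :=
    Real.exp_monotone.comp (monotone_id.const_mul hr)
  have hXexp : Integrable (fun ω ↦ X ω * Real.exp (r * X ω)) μ := by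
    simpa only [smul_eq_mul, mul_comm] using (integrable_tilted_iff hexp X).1 hX_tilted
  calc
    ∫ ω, X ω ∂μ ≤ (∫ ω, X ω * Real.exp (r * X ω) ∂μ) / ∫ ω, Real.exp (r * X ω) ∂μ :=
      (le_div_iff₀ (integral_exp_pos hexp)).2 <|
        integral_mul_integral_comp_le_integral_mul_comp_of_monotone hφ hX hexp hXexp
    _ = ∫ ω, X ω ∂(μ.tilted fun ω ↦ r * X ω) := by
      rw [integral_tilted, ← integral_div]
      congr with ω
      rw [smul_eq_mul, div_mul_eq_mul_div, mul_comm]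

theorem integral_tilted_mul_mono {μ : Measure Ω} {s t : ℝ} (hst : s ≤ t)
    (hs : s ∈ integrableExpSet X μ) (ht : t ∈ integrableExpSet X μ)
    (hXs : Integrable X (μ.tilted fun ω ↦ s * X ω))
    (hXt : Integrable X (μ.tilted fun ω ↦ t * X ω)) :
    ∫ ω, X ω ∂(μ.tilted fun ω ↦ s * X ω) ≤ ∫ ω, X ω ∂(μ.tilted fun ω ↦ t * X ω) := by
  obtain rfl | _ := eq_zero_or_neZero μ
  · simp only [tilted_zero_measure, le_refl]
  have := isProbabilityMeasure_tilted hs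
  have hsplit : (fun ω ↦ s * X ω) + (fun ω ↦ (t - s) * X ω) = fun ω ↦ t * X ω := by
    ext ω
    simp only [Pi.add_apply]
    ring
  have htilt : (μ.tilted fun ω ↦ s * X ω).tilted (fun ω ↦ (t - s) * X ω) =
      μ.tilted fun ω ↦ t * X ω := by
    rw [tilted_tilted hs, hsplit]
  have hexp : Integrable (fun ω ↦ Real.exp ((t - s) * X ω)) (μ.tilted fun ω ↦ s * X ω) := by
    rw [integrable_tilted_iff hs]
    refine ht.congr (ae_of_all _ fun ω ↦ ?_)
    simp only [smul_eq_mul, ← Real.exp_add]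
    ring_nf
  rw [← htilt] at hXt ⊢
  exact integral_le_integral_tilted_mul (sub_nonneg.2 hst) hexp hXs hXt

end Tilted

section CompactRange

lemma integrable_comp_of_continuousOn_of_isCompact {Ω E F : Type*} [MeasurableSpace Ω]
    {μ : Measure Ω} [IsFiniteMeasure μ] [TopologicalSpace E] [T2Space E] [MeasurableSpace E]
    [OpensMeasurableSpace E] [NormedAddCommGroup F] {X : Ω → E} (hX : AEMeasurable X μ) {K : Set E}
    (hK : IsCompact K) (hXK : ∀ᵐ ω ∂μ, X ω ∈ K) {f : E → F} (hf : ContinuousOn f K) :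
    Integrable (fun ω ↦ f (X ω)) μ := by
  have hmap : (μ.map X).restrict K = μ.map X :=
    Measure.restrict_eq_self_of_ae_mem ((ae_map_iff hX hK.measurableSet).2 hXK)
  have hf_map : Integrable f (μ.map X) := hmap ▸ hf.integrableOn_compact hK
  exact hf_map.comp_aemeasurable hX

variable {Ω : Type*} [MeasurableSpace Ω] {μ : Measure Ω} [IsFiniteMeasure μ] {X : Ω → ℝ} {c C : ℝ}

lemma integrable_rpow_of_mem_Icc (hX : AEMeasurable X μ) (hc : 0 < c)
    (hmem : ∀ᵐ ω ∂μ, X ω ∈ Set.Icc c C) (β : ℝ) : Integrable (fun ω ↦ X ω ^ β) μ :=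
  integrable_comp_of_continuousOn_of_isCompact hX isCompact_Icc hmem <|
    continuousOn_id.rpow_const fun _ hx ↦ .inl (hc.trans_le hx.1).ne'

lemma integrable_rpow_mul_log_of_mem_Icc (hX : AEMeasurable X μ) (hc : 0 < c)
    (hmem : ∀ᵐ ω ∂μ, X ω ∈ Set.Icc c C) (β : ℝ) :
    Integrable (fun ω ↦ X ω ^ β * Real.log (X ω)) μ := by
  have hne : ∀ x ∈ Set.Icc c C, x ≠ 0 := fun x hx ↦ (hc.trans_le hx.1).ne'
  exact integrable_comp_of_continuousOn_of_isCompact hX isCompact_Icc hmem <|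
    (continuousOn_id.rpow_const fun x hx ↦ .inl (hne x hx)).mul (continuousOn_id.log hne)

end CompactRange

section PowerPosterior

variable {Z : Type*} [MeasurableSpace Z] {p : Measure Z} {ℓ : Z → ℝ}

lemma rpow_ae_eq_exp_mul_log (hpos : ∀ᵐ z ∂p, 0 < ℓ z) (β : ℝ) :
    (fun z ↦ ℓ z ^ β) =ᵐ[p] fun z ↦ Real.exp (β * Real.log (ℓ z)) := by
  filter_upwards [hpos] with z hz
  rw [Real.rpow_def_of_pos hz, mul_comm]

lemma withDensity_rpow_div_integral_eq_tilted (hpos : ∀ᵐ z ∂p, 0 < ℓ z) (β : ℝ) :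
    (p.withDensity fun z ↦ ENNReal.ofReal (ℓ z ^ β / ∫ w, ℓ w ^ β ∂p)) =
      p.tilted fun z ↦ β * Real.log (ℓ z) := by
  refine withDensity_congr_ae ?_
  filter_upwards [rpow_ae_eq_exp_mul_log hpos β] with z hz
  rw [hz, integral_congr_ae (rpow_ae_eq_exp_mul_log hpos β)]

lemma integrable_log_tilted_mul_log (hpos : ∀ᵐ z ∂p, 0 < ℓ z) {β : ℝ}
    (hexp : β ∈ integrableExpSet (fun z ↦ Real.log (ℓ z)) p)
    (hlog : Integrable (fun z ↦ ℓ z ^ β * Real.log (ℓ z)) p) :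
    Integrable (fun z ↦ Real.log (ℓ z)) (p.tilted fun z ↦ β * Real.log (ℓ z)) :=
  (integrable_tilted_iff hexp _).2 <|
    hlog.congr ((rpow_ae_eq_exp_mul_log hpos β).mul .rfl)

theorem integral_log_tilted_mono_general (hpos : ∀ᵐ z ∂p, 0 < ℓ z) {β₁ β₂ : ℝ} (hβ : β₁ ≤ β₂)
    (hint₁ : Integrable (fun z ↦ ℓ z ^ β₁) p) (hint₂ : Integrable (fun z ↦ ℓ z ^ β₂) p)
    (hlog₁ : Integrable (fun z ↦ ℓ z ^ β₁ * Real.log (ℓ z)) p)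
    (hlog₂ : Integrable (fun z ↦ ℓ z ^ β₂ * Real.log (ℓ z)) p) :
    ∫ z, Real.log (ℓ z)
        ∂(p.withDensity fun z ↦ ENNReal.ofReal (ℓ z ^ β₁ / ∫ w, ℓ w ^ β₁ ∂p))
      ≤ ∫ z, Real.log (ℓ z)
        ∂(p.withDensity fun z ↦ ENNReal.ofReal (ℓ z ^ β₂ / ∫ w, ℓ w ^ β₂ ∂p)) := by
  have hexp₁ : β₁ ∈ integrableExpSet (fun z ↦ Real.log (ℓ z)) p :=
    hint₁.congr (rpow_ae_eq_exp_mul_log hpos β₁)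
  have hexp₂ : β₂ ∈ integrableExpSet (fun z ↦ Real.log (ℓ z)) p :=
    hint₂.congr (rpow_ae_eq_exp_mul_log hpos β₂)
  rw [withDensity_rpow_div_integral_eq_tilted hpos, withDensity_rpow_div_integral_eq_tilted hpos]
  exact integral_tilted_mul_mono hβ hexp₁ hexp₂ (integrable_log_tilted_mul_log hpos hexp₁ hlog₁)
    (integrable_log_tilted_mul_log hpos hexp₂ hlog₂)

end PowerPosterior

/-- **Accuracy decreases as γ increases.**  Let `p` be a probability measure and `ℓ` a
measurable likelihood with `0 < c ≤ ℓ ≤ C`.  For `β > 0`, let `q^(β)` be the tilted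
probability measure with density `ℓ^β / ∫ ℓ^β dp` with respect to `p`.  Then for
`0 < β₁ ≤ β₂` the expected log-likelihood is monotone:
`∫ log ℓ dq^(β₁) ≤ ∫ log ℓ dq^(β₂)`.  Writing `β = 1/γ`, the average accuracy of the power
posterior `q_γ*(z) ∝ p(z) ℓ(z)^{1/γ}` is non-increasing in `γ`. -/
theorem integral_log_tilted_mono {Z : Type*} [MeasurableSpace Z]
    (p : Measure Z) [IsProbabilityMeasure p]
    (ℓ : Z → ℝ) (hℓ : Measurable ℓ)
    (c C : ℝ) (hc : 0 < c) (hlb : ∀ z, c ≤ ℓ z) (hub : ∀ z, ℓ z ≤ C)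
    (β₁ β₂ : ℝ) (hβ₁ : 0 < β₁) (hβ : β₁ ≤ β₂) :
    ∫ z, Real.log (ℓ z)
        ∂(p.withDensity fun z => ENNReal.ofReal (ℓ z ^ β₁ / ∫ w, ℓ w ^ β₁ ∂p))
      ≤ ∫ z, Real.log (ℓ z)
        ∂(p.withDensity fun z => ENNReal.ofReal (ℓ z ^ β₂ / ∫ w, ℓ w ^ β₂ ∂p)) := by
  have hmem : ∀ᵐ z ∂p, ℓ z ∈ Set.Icc c C := ae_of_all p fun z ↦ ⟨hlb z, hub z⟩
  have hrpow := integrable_rpow_of_mem_Icc hℓ.aemeasurable hc hmem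
  have hlog := integrable_rpow_mul_log_of_mem_Icc hℓ.aemeasurable hc hmem
  exact integral_log_tilted_mono_general (ae_of_all p fun z ↦ hc.trans_le (hlb z)) hβ
    (hrpow β₁) (hrpow β₂) (hlog β₁) (hlog β₂)
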